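/- The ternarization of a pair of amicable words is unique: if w and w' are finite words over {A,B,C} with σ01(w) = σ01(w') and σ10(w) = σ10(w'), then w = w'. Equivalently, the map w ↦ (σ01(w), σ10(w)) from {A,B,C}* to {0,1}* × {0,1}* is injective. -/

import Mathlib

/-!
The pair of first letters of `σ01(a)` and `σ10(a)` is `(0,0)`, `(0,1)`, `(1,1)` for
`a = A, B, C` respectively. So for any two distinct letters one of the two morphisms sends them to
words neither of which is a prefix of the other. As in the decoding of a prefix code, the two
images of a word then determine its first letter, and cancelling the images of that letter leaves
the images of the remaining word.
-/

/-- The alphabet of 3iet words. -/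
inductive L3 | A | B | C
deriving DecidableEq, Inhabited

/-- The three-interval exchange transformation `T_{ε,ℓ}`. -/
noncomputable def T3 (ε ℓ : ℝ) (x : ℝ) : ℝ :=
  if x < ℓ - 1 + ε then x + 1 - ε
  else if x < ε then x + 1 - 2*ε
  else x - ε

/-- The 3iet word `u_{ε,ℓ,x0}` coding the orbit of `x0` under `T_{ε,ℓ}`. -/
noncomputable def u3 (ε ℓ x0 : ℝ) (n : ℕ) : L3 :=
  if (T3 ε ℓ)^[n] x0 < ℓ - 1 + ε then L3.A
  else if (T3 ε ℓ)^[n] x0 < ε then L3.B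
  else L3.C

/-- The two-interval exchange transformation `T_ε`. -/
noncomputable def T2 (ε : ℝ) (x : ℝ) : ℝ := if x < ε then x + 1 - ε else x - ε

/-- The Sturmian word `u_{ε,x0}` of slope `ε` coding the orbit of `x0` under `T_ε`
(letter `0` is `false`, letter `1` is `true`). -/
noncomputable def u2 (ε x0 : ℝ) (n : ℕ) : Bool := if (T2 ε)^[n] x0 < ε then false else true

/-- `w` is a factor of the infinite word `u`. -/
def IsFactor {α : Type*} (w : List α) (u : ℕ → α) : Prop :=
  ∃ i : ℕ, w = (List.range w.length).map fun j => u (i + j)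

/-- The prefix of length `m` of the periodic infinite word `www⋯`;
for `|w| ≤ m` this is the fractional power `w^{m/|w|}`. -/
def powPrefix {α : Type*} [Inhabited α] (w : List α) (m : ℕ) : List α :=
  (List.range m).map fun j => w.getD (j % w.length) default

/-- The index of the factor `w` in the infinite word `u`:
`sup {r ∈ ℚ, r ≥ 1, r|w| ∈ ℕ | w^r is a factor of u}`, as an element of `ℝ ∪ {+∞}`. -/
noncomputable def factorIndex {α : Type*} [Inhabited α] (u : ℕ → α) (w : List α) : EReal :=
  sSup {x : EReal | ∃ m : ℕ, w.length ≤ m ∧ IsFactor (powPrefix w m) u ∧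
    x = (((m : ℝ) / (w.length : ℝ) : ℝ) : EReal)}

/-- The index of the infinite word `u`: `sup {ind(w) | w a nonempty factor of u}`. -/
noncomputable def wordIndex {α : Type*} [Inhabited α] (u : ℕ → α) : EReal :=
  sSup {x : EReal | ∃ w : List α, w ≠ [] ∧ IsFactor w u ∧ x = factorIndex u w}

/-- The Gauss map `x ↦ {1/x}`. -/
noncomputable def gaussMap (x : ℝ) : ℝ := Int.fract x⁻¹

/-- `cfa ε n` is the partial quotient `a_{n+1}` of the continued fraction
expansion `ε = [0; a₁, a₂, a₃, …]` of the irrational `ε ∈ (0,1)`. -/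
noncomputable def cfa (ε : ℝ) (n : ℕ) : ℕ := ⌊(gaussMap^[n] ε)⁻¹⌋₊

/-- The morphism `σ01 : A ↦ 0, B ↦ 01, C ↦ 1`. -/
def sigma01 : L3 → List Bool
  | L3.A => [false]
  | L3.B => [false, true]
  | L3.C => [true]

/-- The morphism `σ10 : A ↦ 0, B ↦ 10, C ↦ 1`. -/
def sigma10 : L3 → List Bool
  | L3.A => [false]
  | L3.B => [true, false]
  | L3.C => [true]

/-- The image `φ(u₀)φ(u₁)φ(u₂)⋯` of an infinite word `u` under a (nonerasing) morphism `φ`. -/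
def morphWord (φ : L3 → List Bool) (u : ℕ → L3) (m : ℕ) : Bool :=
  ((List.range (m+1)).flatMap fun k => φ (u k)).getD m false

/-- `u` is a uniformly recurrent infinite word: every factor occurs infinitely often
with bounded gaps (every window of some length `R` contains an occurrence). -/
def UniformlyRecurrent {α : Type*} (u : ℕ → α) : Prop :=
  ∀ w : List α, IsFactor w u → ∃ R : ℕ, ∀ i : ℕ, ∃ j : ℕ, i ≤ j ∧ j < i + R ∧
    w = (List.range w.length).map fun t => u (j + t)

/-- `u` is eventually periodic. -/
def EventuallyPeriodic {α : Type*} (u : ℕ → α) : Prop :=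
  ∃ N p : ℕ, 0 < p ∧ ∀ n : ℕ, N ≤ n → u (n + p) = u n

/-- The standard words of `ε = [0; a₁, a₂, …]`, with the index shifted by one:
`sw ε 0 = s₋₁ = 1`, `sw ε 1 = s₀ = 0`, `sw ε 2 = s₁ = s₀^{a₁-1} s₋₁`, and
`sw ε (n+3) = s_{n+2} = s_{n+1}^{a_{n+2}} s_n`. -/
noncomputable def sw (ε : ℝ) : ℕ → List Bool
  | 0 => [true]
  | 1 => [false]
  | 2 => (List.replicate (cfa ε 0 - 1) ([false] : List Bool)).flatten ++ [true]
  | (n+3) => (List.replicate (cfa ε (n+1)) (sw ε (n+2))).flatten ++ sw ε (n+1)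

/-- Denominators of the convergents of `ε`, shifted by one: `qq ε 0 = q₋₁ = 0`,
`qq ε 1 = q₀ = 1`, and `qq ε (n+2) = q_{n+1} = a_{n+1} q_n + q_{n-1}`. -/
noncomputable def qq (ε : ℝ) : ℕ → ℕ
  | 0 => 0
  | 1 => 1
  | (n+2) => cfa ε n * qq ε (n+1) + qq ε n

/-- `u` is a 3iet word. -/
def Is3ietWord (u : ℕ → L3) : Prop :=
  ∃ ε ℓ x0 : ℝ, Irrational ε ∧ 0 < ε ∧ ε < 1 ∧ max ε (1 - ε) < ℓ ∧ ℓ < 1 ∧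
    x0 ∈ Set.Ico 0 ℓ ∧ u = u3 ε ℓ x0

/-- `v` is a Sturmian word. -/
def IsSturmianWord (v : ℕ → Bool) : Prop :=
  ∃ ε x0 : ℝ, Irrational ε ∧ 0 < ε ∧ ε < 1 ∧ x0 ∈ Set.Ico (0:ℝ) 1 ∧ v = u2 ε x0

/-- The infinite binary word `v1` is amicable with `v2` (`v1 ∝ v2`). -/
def AmicableInf (v1 v2 : ℕ → Bool) : Prop :=
  ∃ w : ℕ → L3, v1 = morphWord sigma01 w ∧ v2 = morphWord sigma10 w

/-- The morphism `Φ_k : A ↦ 0, B ↦ 01^{k+1}, C ↦ 01^k`. -/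
def Phi (k : ℕ) : L3 → List Bool
  | L3.A => [false]
  | L3.B => false :: List.replicate (k+1) true
  | L3.C => false :: List.replicate k true

/-- The infinite word `B₀B₁B₂⋯` obtained by concatenating the sequence of
(nonempty) blocks `B`. -/
def concatOfBlocks (B : ℕ → List Bool) (m : ℕ) : Bool :=
  ((List.range (m+1)).flatMap B).getD m false

section JointPrefixCode

variable {ι α : Type*} {β : ι → Type*} {φ : ∀ i, α → List (β i)}

/-- A family of morphisms from words over `α`, given by the images `φ i a` of the letters, is a
joint prefix code if no letter is erased by all of them and any two distinct letters are sent by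
some `φ i` to words neither of which is a prefix of the other. For a one-element family this says
that `φ` injectively enumerates a prefix code. -/
structure IsJointPrefixCode (φ : ∀ i, α → List (β i)) : Prop where
  exists_ne_nil : ∀ a, ∃ i, φ i a ≠ []
  eq_of_forall_prefix_or_prefix : ∀ a b, (∀ i, φ i a <+: φ i b ∨ φ i b <+: φ i a) → a = b

namespace IsJointPrefixCode

theorem eq_nil_of_forall_flatMap_eq_nil (hφ : IsJointPrefixCode φ) {w : List α}
    (h : ∀ i, w.flatMap (φ i) = []) : w = [] := by
  refine List.eq_nil_iff_forall_not_mem.mpr fun a ha => ?_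
  obtain ⟨i, hi⟩ := hφ.exists_ne_nil a
  exact hi (List.flatMap_eq_nil_iff.mp (h i) a ha)

theorem eq_of_forall_append_eq_append (hφ : IsJointPrefixCode φ) {a b : α}
    {s t : ∀ i, List (β i)} (h : ∀ i, φ i a ++ s i = φ i b ++ t i) : a = b :=
  hφ.eq_of_forall_prefix_or_prefix a b fun i =>
    List.prefix_or_prefix_of_prefix (List.prefix_append _ (s i)) (h i ▸ List.prefix_append _ (t i))

theorem flatMap_injective (hφ : IsJointPrefixCode φ) :
    Function.Injective fun (w : List α) i => w.flatMap (φ i) := by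
  intro w w' h
  replace h : ∀ i, w.flatMap (φ i) = w'.flatMap (φ i) := congrFun h
  induction w generalizing w' with
  | nil => exact (hφ.eq_nil_of_forall_flatMap_eq_nil fun i => (h i).symm).symm
  | cons a u ih =>
    cases w' with
    | nil => exact hφ.eq_nil_of_forall_flatMap_eq_nil h
    | cons b v =>
      simp only [List.flatMap_cons] at h
      obtain rfl : a = b := hφ.eq_of_forall_append_eq_append h
      have huv : u = v := ih fun i => List.append_cancel_left (h i)
      rw [huv]

end IsJointPrefixCode

end JointPrefixCode

theorem isJointPrefixCode_sigma01_sigma10 : IsJointPrefixCode ![sigma01, sigma10] where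
  exists_ne_nil a := ⟨0, by cases a <;> decide⟩
  eq_of_forall_prefix_or_prefix a b := by cases a <;> cases b <;> decide

/-- the ternarization of a pair of amicable words is unique, i.e. the map
`w ↦ (σ01(w), σ10(w))` on finite ternary words is injective. -/
theorem ternarization_unique (w w' : List L3)
    (h01 : w.flatMap sigma01 = w'.flatMap sigma01)
    (h10 : w.flatMap sigma10 = w'.flatMap sigma10) :
    w = w' := by
  exact isJointPrefixCode_sigma01_sigma10.flatMap_injective
    (funext (Fin.forall_fin_two.mpr ⟨h01, h10⟩))
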